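/- arXiv:math/0603292 — 2 statements merged into one kernel-verified Lean document; each statement's English description precedes it below -/
import Mathlib

section
/- For every real number x ≥ 1, the sum R₂(x) := Σ_{x < n ≤ 2x} r(n)² satisfies R₂(x) ≤ 19.2·x·log(2e²x). -/
/-- `r n` is the number of representations of `n` as a sum of two squares of integers. -/
noncomputable def r (n : ℕ) : ℕ := Set.ncard {p : ℤ × ℤ | p.1 ^ 2 + p.2 ^ 2 = (n : ℤ)}

/-!
Write `r n` as the number of Gaussian integers of norm `n`. If `z` and `w` have the same norm and
`g` is their gcd, then `z = g a` and `w = g u a*` with `u` a unit and `a` relatively prime to its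
conjugate `a*`; in particular `a` has odd norm, since conjugation is trivial on `ℤ[i]/(1 + i)`.
Since `a` may be changed by a unit at the expense of `g`, it can be normalised within its class up
to units, and then `a u` determines both `a` and `u`. So `(z, w)` is determined by `(a u, g)`, which
gives `r(n)² ≤ ∑_{de = n, d odd} r(d) r(e)`.

Up to rotation every point lies in the quadrant `x > 0`, `y ≥ 0`, where Cantor-style pairing
functions number the points so that the index is less than `x² + y²`, and less than `(x² + y²) / 2`
if only points of odd norm are numbered. Hence `∑_{e ≤ k} r(e) ≤ 4 k` and
`∑_{d ≤ k, d odd} r(d) ≤ 2 (k + 1)`, and by partial summation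
`∑_{n ≤ N} r(n)² ≤ 4 N ∑_{d ≤ N, d odd} r(d) / d ≤ 8 N (1 + H_N)`.
-/

open Finset

theorem gaussianInt_norm_eq (z : GaussianInt) : z.norm = z.re ^ 2 + z.im ^ 2 := by
  rw [Zsqrtd.norm_def]
  ring

theorem finite_setOf_norm_eq (n : ℕ) : {z : GaussianInt | z.norm = n}.Finite := by
  refine Set.Finite.of_injOn (f := fun z ↦ (z.re, z.im))
    (t := Set.Icc (-n : ℤ) n ×ˢ Set.Icc (-n : ℤ) n) ?_ ?_
    ((Set.finite_Icc _ _).prod (Set.finite_Icc _ _))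
  · intro z hz
    rw [Set.mem_ofPred_eq, gaussianInt_norm_eq] at hz
    constructor <;> rw [Set.mem_Icc, ← abs_le] <;>
      nlinarith [sq_abs z.re, sq_abs z.im, Int.le_self_sq |z.re|, Int.le_self_sq |z.im|]
  · intro z _ w _ h
    exact Zsqrtd.ext (congrArg Prod.fst h) (congrArg Prod.snd h)

/-- The finite set of Gaussian integers of norm `n`: the representations counted by `r n`, as a
subset of the ring `ℤ[i]`. -/
noncomputable def gaussianSphere (n : ℕ) : Finset GaussianInt :=
  (finite_setOf_norm_eq n).toFinset

theorem mem_gaussianSphere {n : ℕ} {z : GaussianInt} : z ∈ gaussianSphere n ↔ z.norm = n := by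
  simp [gaussianSphere]

theorem card_gaussianSphere (n : ℕ) : #(gaussianSphere n) = r n := by
  rw [← Set.ncard_coe_finset]
  refine Set.BijOn.ncard_eq (f := fun z : GaussianInt ↦ (z.re, z.im)) ⟨?_, ?_, ?_⟩
  · intro z hz
    simpa [mem_gaussianSphere, gaussianInt_norm_eq] using hz
  · intro z _ w _ h
    exact Zsqrtd.ext (congrArg Prod.fst h) (congrArg Prod.snd h)
  · intro p hp
    exact ⟨⟨p.1, p.2⟩, by simpa [mem_gaussianSphere, gaussianInt_norm_eq] using hp, rfl⟩

section StarGCDDomain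

variable {R : Type*} [CommRing R] [StarRing R]

theorem isRelPrime_star_of_associated {a b : R} (hab : Associated a b)
    (ha : IsRelPrime a (star a)) : IsRelPrime b (star b) :=
  (ha.of_dvd_left hab.dvd').of_dvd_right (map_dvd (starRingEnd R) hab.dvd')

variable [IsDomain R] [GCDMonoid R]

theorem exists_eq_mul_and_eq_mul_star {z w : R} (h : z * star z = w * star w) :
    ∃ (g a : R) (u : Rˣ), z = g * a ∧ w = g * (u * star a) ∧ IsRelPrime a (star a) := by
  rcases eq_or_ne z 0 with rfl | hz
  · have hw : w = 0 := by simpa using h.symm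
    exact ⟨0, 1, 1, by simp, by simp [hw], isRelPrime_one_left⟩
  obtain ⟨a, b, hza, hwb, hab⟩ := extract_gcd z w
  rw [gcd_isUnit_iff_isRelPrime] at hab
  have hg : gcd z w ≠ 0 := gcd_ne_zero_of_left hz
  generalize gcd z w = g at hza hwb hg
  subst hza hwb
  have hnorm : a * star a = b * star b := by
    refine mul_left_cancel₀ (mul_ne_zero hg (star_ne_zero.mpr hg)) ?_
    rw [star_mul, star_mul] at h
    linear_combination h
  have hdvd : star a ∣ b := by
    have ha : a ∣ star b := hab.dvd_of_dvd_mul_left (Dvd.intro _ hnorm)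
    simpa [starRingEnd_apply] using map_dvd (starRingEnd R) ha
  have hdvd' : b ∣ star a := hab.symm.dvd_of_dvd_mul_left (Dvd.intro _ hnorm.symm)
  obtain ⟨u, rfl⟩ := associated_of_dvd_dvd hdvd hdvd'
  exact ⟨g, a, u, rfl, by ring, (isRelPrime_mul_unit_right_right u.isUnit).mp hab⟩

theorem exists_surj_of_mul_star_eq :
    ∃ F : R × R → R × R, ∀ z w : R, z * star z = w * star w →
      ∃ b g : R, F (b, g) = (z, w) ∧ Associated (b * g) z ∧ IsRelPrime b (star b) := by
  -- Only the representative `ρ b` of the class of `b` up to units is used as the factor `a` of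
  -- `exists_eq_mul_and_eq_mul_star`, so the unit `υ b` left over in `b` can encode `u`.
  let ρ : R → R := fun b ↦ Quot.out (Associates.mk b)
  choose υ hυ using fun b : R ↦ Associates.mk_quot_out b
  change ∀ b, ρ b * υ b = b at hυ
  refine ⟨fun p ↦ (p.2 * ρ p.1, p.2 * (υ p.1 * star (ρ p.1))), fun z w hzw ↦ ?_⟩
  obtain ⟨g, a, u, rfl, rfl, ha⟩ := exists_eq_mul_and_eq_mul_star hzw
  let v : Rˣ := υ a
  let e : Rˣ := u * v⁻¹ * star v
  have ha_eq : ρ a * v = a := hυ a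
  have hz : g * a = g * v * ρ a := by linear_combination -g * ha_eq
  have hw : g * (u * star a) = g * v * (e * star (ρ a)) := by
    have hstar : star a = star (v : R) * star (ρ a) := by rw [← star_mul', mul_comm, ha_eq]
    simp only [e, Units.val_mul, Units.coe_star, hstar]
    linear_combination -g * u * star (v : R) * star (ρ a) * v.mul_inv
  have hba : Associated a (ρ a * e) :=
    (Associates.mk_quot_out a).symm.trans ⟨e, rfl⟩
  have hρ : ρ (ρ a * e) = ρ a :=
    congrArg Quot.out (Associates.mk_eq_mk_iff_associated.mpr hba.symm)
  have hρ0 : ρ a ≠ 0 := by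
    intro h0
    rw [← ha_eq, h0, zero_mul, star_zero, isRelPrime_zero_left] at ha
    exact not_isUnit_zero ha
  have hυe : (υ (ρ a * e) : R) = e := mul_left_cancel₀ hρ0 (by simpa [hρ] using hυ (ρ a * e))
  refine ⟨ρ a * e, g * v, by simp only [hρ, hυe, hz, hw], ⟨e⁻¹, ?_⟩,
    isRelPrime_star_of_associated hba ha⟩
  linear_combination (g * v * ρ a) * e.mul_inv - hz

end StarGCDDomain

theorem odd_norm_of_isRelPrime_star {a : GaussianInt} (h : IsRelPrime a (star a)) :
    Odd a.norm := by
  let φ : GaussianInt →+* ZMod 2 := Zsqrtd.lift ⟨1, by decide⟩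
  have hstar : φ (star a) = φ a := by
    simp [φ, Zsqrtd.lift, CharTwo.neg_eq]
  have hunit : IsUnit (φ a) := by
    simpa only [hstar, isCoprime_self] using h.isCoprime.map φ
  have hnorm : (a.norm : ZMod 2) = φ a * φ a := by
    rw [← map_intCast φ, Zsqrtd.norm_eq_mul_conj, map_mul, hstar]
  rw [← Int.not_even_iff_odd, ← ZMod.intCast_eq_zero_iff_even, hnorm]
  exact (hunit.mul hunit).ne_zero

/-- The restriction of `r` to the odd numbers, extended by zero: the weight of the divisor `d` in
the convolution bound for `r n ^ 2`. -/
noncomputable def rOdd (n : ℕ) : ℕ := if Odd n then r n else 0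

/-- The points `(a + 1, b)` on the circle of squared radius `n` in the quadrant `x > 0`, `y ≥ 0`,
which contains exactly one point of each nonzero orbit of the rotations by right angles. A point is
stored as the pair `(a, b)`, so that all pairs of natural numbers occur. -/
def quadrantPoints (n : ℕ) : Finset (ℕ × ℕ) :=
  {p ∈ range n ×ˢ range (n + 1) | (p.1 + 1) ^ 2 + p.2 ^ 2 = n}

theorem mem_quadrantPoints {n : ℕ} {p : ℕ × ℕ} :
    p ∈ quadrantPoints n ↔ (p.1 + 1) ^ 2 + p.2 ^ 2 = n := by
  simp only [quadrantPoints, mem_filter, mem_product, mem_range, and_iff_right_iff_imp]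
  rintro rfl
  constructor <;> nlinarith

theorem exists_eq_sqrtd_pow_mul {z : GaussianInt} (hz : z ≠ 0) :
    ∃ j < 4, ∃ p : ℕ × ℕ, z = Zsqrtd.sqrtd ^ j * ⟨p.1 + 1, p.2⟩ := by
  obtain ⟨x, y⟩ := z
  have h : x ≠ 0 ∨ y ≠ 0 := by
    by_contra! h
    exact hz (Zsqrtd.ext h.1 h.2)
  have hquadrant : (0 < x ∧ 0 ≤ y) ∨ (x ≤ 0 ∧ 0 < y) ∨ (x < 0 ∧ y ≤ 0) ∨ (0 ≤ x ∧ y < 0) := by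
    omega
  rcases hquadrant with h | h | h | h
  · refine ⟨0, by norm_num, ((x - 1).toNat, y.toNat), ?_⟩
    ext <;> simp <;> omega
  · refine ⟨1, by norm_num, ((y - 1).toNat, (-x).toNat), ?_⟩
    ext <;> simp <;> omega
  · refine ⟨2, by norm_num, ((-x - 1).toNat, (-y).toNat), ?_⟩
    ext <;> simp [pow_succ] <;> omega
  · refine ⟨3, by norm_num, ((-y - 1).toNat, x.toNat), ?_⟩
    ext <;> simp [pow_succ] <;> omega

theorem r_le_four_mul_card_quadrantPoints {n : ℕ} (hn : n ≠ 0) :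
    r n ≤ 4 * #(quadrantPoints n) := by
  rw [← card_gaussianSphere, ← card_range 4, ← card_product]
  refine card_le_card_of_surjOn (fun q ↦ Zsqrtd.sqrtd ^ q.1 * ⟨q.2.1 + 1, q.2.2⟩) fun z hz ↦ ?_
  rw [mem_coe, mem_gaussianSphere] at hz
  have hz0 : z ≠ 0 := by
    rintro rfl
    simp [eq_comm, hn] at hz
  obtain ⟨j, hj, p, rfl⟩ := exists_eq_sqrtd_pow_mul hz0
  refine ⟨(j, p), ?_, rfl⟩
  have hnorm : Zsqrtd.norm (Zsqrtd.sqrtd ^ j : GaussianInt) = 1 :=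
    (map_pow Zsqrtd.normMonoidHom _ j).trans (by simp [Zsqrtd.normMonoidHom, Zsqrtd.norm_def])
  rw [Zsqrtd.norm_mul, hnorm, one_mul, gaussianInt_norm_eq] at hz
  have hp : (p.1 + 1) ^ 2 + p.2 ^ 2 = n := by
    zify
    exact hz
  simpa [mem_quadrantPoints, hj] using hp

theorem sum_r_le_four_mul_of_injOn {s : Finset ℕ} (hs : 0 ∉ s) {N : ℕ} {f : ℕ × ℕ → ℕ}
    (hfN : ∀ p : ℕ × ℕ, (p.1 + 1) ^ 2 + p.2 ^ 2 ∈ s → f p < N)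
    (hf : Set.InjOn f {p | (p.1 + 1) ^ 2 + p.2 ^ 2 ∈ s}) :
    ∑ n ∈ s, r n ≤ 4 * N := by
  calc ∑ n ∈ s, r n ≤ ∑ n ∈ s, 4 * #(quadrantPoints n) :=
        sum_le_sum fun n hn ↦ r_le_four_mul_card_quadrantPoints (ne_of_mem_of_not_mem hn hs)
    _ = 4 * #(s.sigma quadrantPoints) := by rw [← mul_sum, card_sigma]
    _ ≤ 4 * #(range N) := by
      gcongr
      refine card_le_card_of_injOn (fun q ↦ f q.2) ?_ ?_
      · rintro ⟨n, p⟩ h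
        simp only [coe_sigma, Set.mem_sigma_iff, mem_coe, mem_quadrantPoints] at h
        obtain ⟨hn, rfl⟩ := h
        simpa using hfN p hn
      · rintro ⟨n, p⟩ h ⟨m, q⟩ h' hpq
        simp only [coe_sigma, Set.mem_sigma_iff, mem_coe, mem_quadrantPoints] at h h'
        obtain ⟨hn, rfl⟩ := h
        obtain ⟨hm, rfl⟩ := h'
        obtain rfl := hf hn hm hpq
        rfl
    _ = 4 * N := by rw [card_range]

theorem pair_lt_add_one_sq_add_sq (a b : ℕ) : Nat.pair a b < (a + 1) ^ 2 + b ^ 2 := by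
  unfold Nat.pair
  split_ifs <;> nlinarith

theorem sum_r_Ioc_le (k : ℕ) : ∑ n ∈ Ioc 0 k, r n ≤ 4 * k := by
  refine sum_r_le_four_mul_of_injOn (by simp) (f := Nat.pairEquiv) (fun p hp ↦ ?_)
    Nat.pairEquiv.injective.injOn
  exact (pair_lt_add_one_sq_add_sq p.1 p.2).trans_le (mem_Ioc.mp hp).2

/-- The position of `(a, b)` when the pairs with `a + b` even are listed along the successive
diagonals `a + b = 2 * m`, which occupy the positions `m ^ 2, …, m ^ 2 + 2 * m`. These pairs stand
for the quadrant points `(a + 1, b)` of odd norm. -/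
def oddDiagonalIndex (p : ℕ × ℕ) : ℕ := (p.1 + p.2) / 2 * ((p.1 + p.2) / 2) + p.1

theorem even_add_of_odd_add_one_sq_add_sq {a b : ℕ} (h : Odd ((a + 1) ^ 2 + b ^ 2)) :
    Even (a + b) := by
  grind

theorem oddDiagonalIndex_injOn : Set.InjOn oddDiagonalIndex {p | Even (p.1 + p.2)} := by
  intro p hp q hq h
  have hsqrt (p : ℕ × ℕ) (hp : Even (p.1 + p.2)) :
      (oddDiagonalIndex p).sqrt = (p.1 + p.2) / 2 :=
    Nat.sqrt_add_eq _ (by grind)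
  have hhalf : (p.1 + p.2) / 2 = (q.1 + q.2) / 2 := by rw [← hsqrt p hp, ← hsqrt q hq, h]
  have hfst : p.1 = q.1 := by simpa [oddDiagonalIndex, hhalf] using h
  ext <;> grind

theorem two_mul_oddDiagonalIndex_lt {p : ℕ × ℕ} (hp : Even (p.1 + p.2)) :
    2 * oddDiagonalIndex p < (p.1 + 1) ^ 2 + p.2 ^ 2 := by
  obtain ⟨m, hm⟩ := hp
  have hmid : (p.1 + p.2) / 2 = m := by omega
  rw [oddDiagonalIndex, hmid]
  zify at hm ⊢
  nlinarith [sq_nonneg ((p.1 : ℤ) - p.2)]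

theorem sum_rOdd_Ioc_le (k : ℕ) : ∑ n ∈ Ioc 0 k, rOdd n ≤ 2 * (k + 1) := by
  simp only [rOdd]
  rw [← sum_filter]
  have heven : {p : ℕ × ℕ | (p.1 + 1) ^ 2 + p.2 ^ 2 ∈ {n ∈ Ioc 0 k | Odd n}} ⊆
      {p | Even (p.1 + p.2)} :=
    fun p hp ↦ even_add_of_odd_add_one_sq_add_sq (mem_filter.mp (Set.mem_ofPred.mp hp)).2
  refine (sum_r_le_four_mul_of_injOn (N := (k + 1) / 2) (f := oddDiagonalIndex) (by simp)
    (fun p hp ↦ ?_) (oddDiagonalIndex_injOn.mono heven)).trans (by omega)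
  have hlt := two_mul_oddDiagonalIndex_lt (heven hp)
  rw [mem_filter, mem_Ioc] at hp
  obtain ⟨m, hm⟩ := hp.2
  omega

theorem sum_Ioc_sum_divisorsAntidiagonal {R : Type*} [Semiring R] (f g : ℕ → R) (N : ℕ) :
    ∑ n ∈ Ioc 0 N, ∑ p ∈ n.divisorsAntidiagonal, f p.1 * g p.2 =
      ∑ d ∈ Ioc 0 N, f d * ∑ e ∈ Ioc 0 (N / d), g e := by
  let F : ArithmeticFunction R := ⟨fun n ↦ if n = 0 then 0 else f n, by simp⟩
  let G : ArithmeticFunction R := ⟨fun n ↦ if n = 0 then 0 else g n, by simp⟩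
  have hF {n : ℕ} (hn : n ≠ 0) : F n = f n := if_neg hn
  have hG {n : ℕ} (hn : n ≠ 0) : G n = g n := if_neg hn
  have hpos {n m : ℕ} (hn : n ∈ Ioc 0 m) : n ≠ 0 := (mem_Ioc.mp hn).1.ne'
  convert ArithmeticFunction.sum_Ioc_mul_eq_sum_sum F G N using 1
  · refine sum_congr rfl fun n _ ↦ ?_
    rw [ArithmeticFunction.mul_apply]
    refine sum_congr rfl fun p hp ↦ ?_
    have hne := Nat.ne_zero_of_mem_divisorsAntidiagonal hp
    rw [hF hne.1, hG hne.2]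
  · refine sum_congr rfl fun d hd ↦ ?_
    rw [hF (hpos hd), sum_congr rfl fun e he ↦ hG (hpos he)]

theorem sum_div_le_mul_one_add_harmonic {K : Type*} [Field K] [LinearOrder K]
    [IsStrictOrderedRing K] (f : ℕ → K) (c : K)
    (hf : ∀ k : ℕ, ∑ n ∈ Ioc 0 k, f n ≤ c * (k + 1)) (N : ℕ) :
    ∑ n ∈ Ioc 0 N, f n / n ≤ c * (1 + (harmonic N : K)) := by
  have hmean (k : ℕ) : (∑ n ∈ Ioc 0 k, f n) / (k + 1) ≤ c :=
    (div_le_iff₀ (by positivity)).mpr (hf k)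
  have hpartial : ∑ n ∈ Ioc 0 N, f n / n ≤ (∑ n ∈ Ioc 0 N, f n) / (N + 1) + c * harmonic N := by
    induction N with
    | zero => simp
    | succ N ih =>
      have hlast :=
        mul_le_mul_of_nonneg_right (hmean (N + 1)) (a := ((N : K) + 1)⁻¹) (by positivity)
      rw [sum_Ioc_succ_top (by lia)] at hlast
      rw [sum_Ioc_succ_top (by lia), sum_Ioc_succ_top (by lia), harmonic_succ]
      push_cast at hlast ⊢
      set S := ∑ n ∈ Ioc 0 N, f n
      have htel : S / (N + 1) + f (N + 1) / (N + 1) =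
          (S + f (N + 1)) / (N + 1 + 1) + (S + f (N + 1)) / (N + 1 + 1) * (N + 1 : K)⁻¹ := by
        field_simp
      linarith
  linarith [hmean N]

theorem r_sq_le_sum_rOdd_mul_r {n : ℕ} (hn : n ≠ 0) :
    r n ^ 2 ≤ ∑ p ∈ n.divisorsAntidiagonal, rOdd p.1 * r p.2 := by
  let _ : GCDMonoid GaussianInt := EuclideanDomain.gcdMonoid GaussianInt
  obtain ⟨F, hF⟩ := exists_surj_of_mul_star_eq (R := GaussianInt)
  let T := {p ∈ n.divisorsAntidiagonal | Odd p.1}.sigma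
    fun p ↦ gaussianSphere p.1 ×ˢ gaussianSphere p.2
  have hT : #T = ∑ p ∈ n.divisorsAntidiagonal, rOdd p.1 * r p.2 := by
    simp only [T, card_sigma, card_product, card_gaussianSphere, sum_filter, rOdd, ite_mul,
      zero_mul]
  have hsurj : Set.SurjOn (fun t : (_ : ℕ × ℕ) × GaussianInt × GaussianInt ↦ F t.2) T
      (gaussianSphere n ×ˢ gaussianSphere n : Finset (GaussianInt × GaussianInt)) := by
    rintro ⟨z, w⟩ hzw
    rw [mem_coe, mem_product, mem_gaussianSphere, mem_gaussianSphere] at hzw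
    obtain ⟨hz, hw⟩ := hzw
    have hmul : z * star z = w * star w := by
      rw [← Zsqrtd.norm_eq_mul_conj, ← Zsqrtd.norm_eq_mul_conj, hz, hw]
    obtain ⟨b, g, hbg, hassoc, hb⟩ := hF z w hmul
    have hnorm : b.norm * g.norm = n := by
      rw [← Zsqrtd.norm_mul, Zsqrtd.norm_eq_of_associated (by norm_num) hassoc, hz]
    have hdiv : (b.norm.natAbs, g.norm.natAbs) ∈ {p ∈ n.divisorsAntidiagonal | Odd p.1} := by
      rw [mem_filter, Nat.mem_divisorsAntidiagonal, ← Int.natAbs_mul, hnorm]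
      exact ⟨⟨Int.natAbs_natCast n, hn⟩, (odd_norm_of_isRelPrime_star hb).natAbs⟩
    refine ⟨⟨(b.norm.natAbs, g.norm.natAbs), (b, g)⟩, mem_sigma.mpr ⟨hdiv, ?_⟩, hbg⟩
    simp [mem_gaussianSphere, abs_of_nonneg, GaussianInt.norm_nonneg]
  calc r n ^ 2 = #(gaussianSphere n ×ˢ gaussianSphere n) := by
        rw [card_product, card_gaussianSphere, sq]
    _ ≤ #T := card_le_card_of_surjOn _ hsurj
    _ = ∑ p ∈ n.divisorsAntidiagonal, rOdd p.1 * r p.2 := hT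

theorem sum_r_sq_Ioc_le (N : ℕ) :
    ∑ n ∈ Ioc 0 N, (r n : ℝ) ^ 2 ≤ 8 * N * (1 + (harmonic N : ℝ)) := by
  have hrow {d : ℕ} : (∑ e ∈ Ioc 0 (N / d), r e : ℝ) ≤ 4 * N / d :=
    calc (∑ e ∈ Ioc 0 (N / d), r e : ℝ) ≤ 4 * (N / d : ℕ) := mod_cast sum_r_Ioc_le (N / d)
      _ ≤ 4 * (N / d) := by gcongr; exact Nat.cast_div_le
      _ = 4 * N / d := by ring
  calc ∑ n ∈ Ioc 0 N, (r n : ℝ) ^ 2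
      ≤ ∑ n ∈ Ioc 0 N, ∑ p ∈ n.divisorsAntidiagonal, (rOdd p.1 : ℝ) * r p.2 :=
        sum_le_sum fun n hn ↦ mod_cast r_sq_le_sum_rOdd_mul_r (mem_Ioc.mp hn).1.ne'
    _ = ∑ d ∈ Ioc 0 N, (rOdd d : ℝ) * ∑ e ∈ Ioc 0 (N / d), (r e : ℝ) :=
        sum_Ioc_sum_divisorsAntidiagonal (fun d ↦ (rOdd d : ℝ)) (fun e ↦ (r e : ℝ)) N
    _ ≤ ∑ d ∈ Ioc 0 N, (rOdd d : ℝ) * (4 * N / d) := by gcongr; exact hrow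
    _ = 4 * N * ∑ d ∈ Ioc 0 N, (rOdd d : ℝ) / d := by
        rw [mul_sum]
        exact sum_congr rfl fun d _ ↦ by ring
    _ ≤ 4 * N * (2 * (1 + (harmonic N : ℝ))) := by
        gcongr
        exact sum_div_le_mul_one_add_harmonic (fun d ↦ (rOdd d : ℝ)) 2
          (fun k ↦ mod_cast sum_rOdd_Ioc_le k) N
    _ = 8 * N * (1 + (harmonic N : ℝ)) := by ring

theorem sum_r_sq_le_general (y : ℝ) (hy : 1 ≤ y) :
    ∑ n ∈ Ioc 0 ⌊y⌋₊, (r n : ℝ) ^ 2 ≤ 8 * y * Real.log (Real.exp 2 * y) := by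
  have hlog : Real.log (Real.exp 2 * y) = 1 + (1 + Real.log y) := by
    rw [Real.log_mul (Real.exp_ne_zero 2) (by positivity), Real.log_exp]
    ring
  calc ∑ n ∈ Ioc 0 ⌊y⌋₊, (r n : ℝ) ^ 2 ≤ 8 * ⌊y⌋₊ * (1 + (harmonic ⌊y⌋₊ : ℝ)) := sum_r_sq_Ioc_le _
    _ ≤ 8 * ⌊y⌋₊ * (1 + (1 + Real.log y)) := by
        gcongr
        exact harmonic_floor_le_one_add_log y hy
    _ ≤ 8 * y * (1 + (1 + Real.log y)) := by
        have hlog0 := Real.log_nonneg hy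
        gcongr
        exact Nat.floor_le (zero_le_one.trans hy)
    _ = 8 * y * Real.log (Real.exp 2 * y) := by rw [hlog]

/-- For every real `x ≥ 1`, one has `R₂(x) = ∑_{x < n ≤ 2x} r(n)² ≤ 19.2·x·log(2e²x)`. -/
theorem sum_r_sq_le (x : ℝ) (hx : 1 ≤ x) :
    (∑ n ∈ Finset.Ioc ⌊x⌋₊ ⌊2 * x⌋₊, (r n : ℝ) ^ 2) ≤ 19.2 * x * Real.log (2 * Real.exp 2 * x) := by
  have hlog : 0 ≤ Real.log (2 * Real.exp 2 * x) := Real.log_nonneg <| by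
    nlinarith [Real.add_one_le_exp 2]
  calc ∑ n ∈ Ioc ⌊x⌋₊ ⌊2 * x⌋₊, (r n : ℝ) ^ 2
      ≤ ∑ n ∈ Ioc 0 ⌊2 * x⌋₊, (r n : ℝ) ^ 2 :=
        sum_le_sum_of_subset_of_nonneg (Ioc_subset_Ioc_left (Nat.zero_le _)) fun _ _ _ ↦ sq_nonneg _
    _ ≤ 8 * (2 * x) * Real.log (Real.exp 2 * (2 * x)) := sum_r_sq_le_general _ (by linarith)
    _ = 16 * x * Real.log (2 * Real.exp 2 * x) := by ring_nf
    _ ≤ 19.2 * x * Real.log (2 * Real.exp 2 * x) := by gcongr; norm_num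
end

section
/- Let a > 0, t > 0, and let m = (m₁,m₂,m₃) ∈ ℤ³ be nonzero. Set g := √(a(m₁² + m₂²) + m₃²/a²) and I(m,s) := ∫_{{u ∈ ℝ³ : (u₁²+u₂²)/a + a²u₃² ≤ s}} e^{2πi(m₁u₁ + m₂u₂ + m₃u₃)} du. Then the twice iterated integral I_{[2]}(m,t) := ∫_0^t ∫_0^{t₁} I(m,t₂) dt₂ dt₁ equals (t^{3/2}·cos(2πg√t))/(π³g⁴) − (3t·sin(2πg√t))/(π⁴g⁵) − (15√t·cos(2πg√t))/(4π⁵g⁶) + (15·sin(2πg√t))/(8π⁶g⁷). -/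
open MeasureTheory Real

/-!
A volume-preserving linear change of variables carries the ellipsoid `Q u ≤ s` to the Euclidean
ball of radius `√s` and the frequency `2 * π * m` to a vector of norm `k = 2 * π * g`. Slicing the
ball by the planes orthogonal to that vector, which meet it in discs of area `π * (s - x ^ 2)`,
leaves a one-dimensional integral with value `4 * π / k ^ 3 * S₁ (k * √s)`, where
`S₁ x = sin x - x * cos x`.

This `S₁` belongs to the family `Sₙ x = x ^ (n + 1) * jₙ x` built from the spherical Bessel
functions `jₙ`. Since `Sₙ₊₁' x = x * Sₙ x`, integrating `Sₙ (k * √s)` over `0 ≤ s ≤ t` gives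
`2 / k ^ 2 * Sₙ₊₁ (k * √t)`. Doing so twice turns `S₁` into
`S₃ x = (15 - 6 * x ^ 2) * sin x - (15 * x - x ^ 3) * cos x`.
-/

/-- The function `x ^ (n + 1) * jₙ x`, where `jₙ` is the spherical Bessel function of the first
kind. It expresses the Fourier transform of a ball and its iterated integrals in the squared radius.
The three-term recurrence of `jₙ` serves as the definition in order to avoid division by `x`. -/
noncomputable def scaledSphericalBessel : ℕ → ℝ → ℝ
  | 0, x => sin x
  | 1, x => sin x - x * cos x
  | n + 2, x => (2 * n + 3) * scaledSphericalBessel (n + 1) x - x ^ 2 * scaledSphericalBessel n x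

@[simp]
theorem scaledSphericalBessel_apply_zero (n : ℕ) : scaledSphericalBessel n 0 = 0 := by
  induction n using Nat.twoStepInduction with
  | zero => simp [scaledSphericalBessel]
  | one => simp [scaledSphericalBessel]
  | more n _ ih => simp [scaledSphericalBessel, ih]

theorem scaledSphericalBessel_one (x : ℝ) : scaledSphericalBessel 1 x = sin x - x * cos x := rfl

theorem scaledSphericalBessel_three (x : ℝ) :
    scaledSphericalBessel 3 x = (15 - 6 * x ^ 2) * sin x - (15 * x - x ^ 3) * cos x := by
  simp only [scaledSphericalBessel]
  push_cast
  ring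

theorem hasDerivAt_scaledSphericalBessel_one (x : ℝ) :
    HasDerivAt (scaledSphericalBessel 1) (x * scaledSphericalBessel 0 x) x := by
  refine ((hasDerivAt_sin x).sub ((hasDerivAt_id x).mul (hasDerivAt_cos x))).congr_deriv ?_
  simp only [scaledSphericalBessel, id]
  ring

theorem hasDerivAt_scaledSphericalBessel_succ (n : ℕ) (x : ℝ) :
    HasDerivAt (scaledSphericalBessel (n + 1)) (x * scaledSphericalBessel n x) x := by
  have recurrence {n : ℕ} {d e : ℝ} (hd : HasDerivAt (scaledSphericalBessel (n + 1)) d x)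
      (he : HasDerivAt (scaledSphericalBessel n) e x) :
      HasDerivAt (scaledSphericalBessel (n + 2))
        ((2 * n + 3) * d - (2 * x * scaledSphericalBessel n x + x ^ 2 * e)) x := by
    refine ((hd.const_mul (2 * n + 3 : ℝ)).sub ((hasDerivAt_pow 2 x).mul he)).congr_deriv ?_
    simp
  induction n using Nat.twoStepInduction with
  | zero => exact hasDerivAt_scaledSphericalBessel_one x
  | one =>
    refine (recurrence (hasDerivAt_scaledSphericalBessel_one x) (hasDerivAt_sin x)).congr_deriv ?_
    simp only [scaledSphericalBessel]
    push_cast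
    ring
  | more n ih ih' =>
    refine (recurrence ih' ih).congr_deriv ?_
    simp only [scaledSphericalBessel]
    push_cast
    ring

@[fun_prop]
theorem continuous_scaledSphericalBessel (n : ℕ) : Continuous (scaledSphericalBessel n) := by
  cases n with
  | zero => exact continuous_sin
  | succ n =>
    exact continuous_iff_continuousAt.2 fun x =>
      (hasDerivAt_scaledSphericalBessel_succ n x).continuousAt

/-- The substitution `x = k * √s`, for which `ds = 2 * x / k ^ 2 * dx`. -/
theorem integral_comp_mul_sqrt {f F : ℝ → ℝ} (hf : Continuous f)
    (hF : ∀ x, HasDerivAt F (x * f x) x) {k t : ℝ} (hk : k ≠ 0) (ht : 0 ≤ t) :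
    ∫ s in (0 : ℝ)..t, f (k * √s) = 2 / k ^ 2 * (F (k * √t) - F 0) := by
  have hF_cont : Continuous F := continuous_iff_continuousAt.2 fun x => (hF x).continuousAt
  have antideriv : ∀ s ∈ Set.Ioo 0 t,
      HasDerivAt (fun s => 2 / k ^ 2 * F (k * √s)) (f (k * √s)) s := by
    intro s hs
    have h_sqrt : √s ≠ 0 := (sqrt_pos.2 hs.1).ne'
    refine (((hF _).comp s ((hasDerivAt_sqrt hs.1.ne').const_mul k)).const_mul _).congr_deriv ?_
    field_simp
  rw [intervalIntegral.integral_eq_sub_of_hasDerivAt_of_le ht (by fun_prop) antideriv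
    (Continuous.intervalIntegrable (by fun_prop) _ _)]
  simp [mul_sub]

theorem integral_scaledSphericalBessel_mul_sqrt (n : ℕ) {k t : ℝ} (hk : k ≠ 0) (ht : 0 ≤ t) :
    ∫ s in (0 : ℝ)..t, scaledSphericalBessel n (k * √s)
      = 2 / k ^ 2 * scaledSphericalBessel (n + 1) (k * √t) := by
  simpa using integral_comp_mul_sqrt (continuous_scaledSphericalBessel n)
    (hasDerivAt_scaledSphericalBessel_succ n) hk ht

theorem integral_eq_scaledSphericalBessel_succ {f : ℝ → ℂ} {C k t : ℝ} {n : ℕ} (hk : k ≠ 0)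
    (ht : 0 ≤ t) (hf : ∀ s, 0 ≤ s → f s = (C * scaledSphericalBessel n (k * √s) : ℝ)) :
    ∫ s in (0 : ℝ)..t, f s = (C * (2 / k ^ 2) * scaledSphericalBessel (n + 1) (k * √t) : ℝ) := by
  have hf_uIcc : Set.EqOn f (fun s => ((C * scaledSphericalBessel n (k * √s) : ℝ) : ℂ))
      (Set.uIcc 0 t) := fun s hs => hf s (Set.uIcc_of_le ht ▸ hs).1
  rw [intervalIntegral.integral_congr hf_uIcc, intervalIntegral.integral_ofReal,
    intervalIntegral.integral_const_mul, integral_scaledSphericalBessel_mul_sqrt n hk ht, mul_assoc]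

/-- The antiderivative is `(p / c - p' / c ^ 2 + p'' / c ^ 3) * exp (c * x)` with
`p x = R ^ 2 - x ^ 2`, as repeated integration by parts shows. -/
theorem integral_sq_sub_sq_mul_cexp {c : ℂ} (hc : c ≠ 0) (R : ℝ) :
    ∫ x in (-R)..R, ((R : ℂ) ^ 2 - x ^ 2) * Complex.exp (c * x)
      = 4 * R * Complex.cosh (c * R) / c ^ 2 - 4 * Complex.sinh (c * R) / c ^ 3 := by
  have antideriv (x : ℝ) : HasDerivAt
      (fun x : ℝ => (((R : ℂ) ^ 2 - x ^ 2) / c + 2 * x / c ^ 2 - 2 / c ^ 3) * Complex.exp (c * x))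
      (((R : ℂ) ^ 2 - x ^ 2) * Complex.exp (c * x)) x := by
    have h_poly := (((((hasDerivAt_id (x : ℂ)).pow 2).const_sub ((R : ℂ) ^ 2)).div_const c).add
      (((hasDerivAt_id (x : ℂ)).const_mul 2).div_const (c ^ 2))).sub_const (2 / c ^ 3)
    have h_exp := ((hasDerivAt_id (x : ℂ)).const_mul c).cexp
    refine ((h_poly.mul h_exp).congr_deriv ?_).comp_ofReal
    simp only [id, Pi.add_apply, Pi.pow_apply]
    field_simp
    ring
  rw [intervalIntegral.integral_eq_sub_of_hasDerivAt (fun x _ => antideriv x)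
    (Continuous.intervalIntegrable (by fun_prop) _ _), Complex.cosh, Complex.sinh]
  push_cast
  rw [mul_neg]
  field_simp
  ring

theorem integral_sq_sub_sq_mul_cexp_I {k : ℝ} (hk : k ≠ 0) (R : ℝ) :
    ∫ x in (-R)..R, ((R : ℂ) ^ 2 - x ^ 2) * Complex.exp (Complex.I * (k * x : ℝ))
      = (4 / k ^ 3 * scaledSphericalBessel 1 (k * R) : ℝ) := by
  have hk' : (k : ℂ) ≠ 0 := mod_cast hk
  have h_arg (x : ℝ) : Complex.I * ((k * x : ℝ) : ℂ) = k * Complex.I * x := by push_cast; ring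
  simp_rw [h_arg, integral_sq_sub_sq_mul_cexp (mul_ne_zero hk' Complex.I_ne_zero),
    mul_right_comm _ Complex.I, Complex.cosh_mul_I, Complex.sinh_mul_I, mul_pow,
    Complex.I_pow_three, Complex.I_sq, scaledSphericalBessel_one]
  push_cast
  field_simp
  ring

theorem setIntegral_prod_comp_fst {X Y F : Type*} [MeasurableSpace X] [MeasurableSpace Y]
    [NormedAddCommGroup F] [NormedSpace ℝ F] [CompleteSpace F] {μ : Measure X} {ν : Measure Y}
    [SFinite μ] [SFinite ν] {S : Set (X × Y)} (hS : MeasurableSet S) {f : X → F}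
    (hf : IntegrableOn (fun p => f p.1) S (μ.prod ν)) :
    ∫ p in S, f p.1 ∂μ.prod ν = ∫ x, ν.real (Prod.mk x ⁻¹' S) • f x ∂μ := by
  rw [← integral_indicator hS, integral_prod _ ((integrable_indicator_iff hS).2 hf)]
  refine integral_congr_ae (.of_forall fun x => ?_)
  have h_slice : (fun y => S.indicator (fun p => f p.1) (x, y))
      = (Prod.mk x ⁻¹' S).indicator fun _ => f x := rfl
  simp only [h_slice]
  rw [integral_indicator (measurable_prodMk_left hS), setIntegral_const]

section Ball

variable {E : Type*} [NormedAddCommGroup E] [InnerProductSpace ℝ E] [FiniteDimensional ℝ E]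
  [MeasurableSpace E] [BorelSpace E]

/-- The coordinates `(s, y) ↦ s • v + y` along a unit vector `v` and orthogonally to it, used to
slice a ball by hyperplanes. The domain carries the product measure, not the `L²` structure. -/
noncomputable def orthogonalCoordinates (v : E) (hv : ‖v‖ = 1) : ℝ × (ℝ ∙ v)ᗮ ≃ᵐ E :=
  (MeasurableEquiv.toLp 2 _).trans
    ((LinearIsometryEquiv.withLpProdCongr 2 (.toSpanUnitSingleton v hv) (.refl ℝ _)).trans
      (ℝ ∙ v).orthogonalDecomposition.symm).toMeasurableEquiv

namespace orthogonalCoordinates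

variable {v : E} (hv : ‖v‖ = 1)

theorem apply (p : ℝ × (ℝ ∙ v)ᗮ) : orthogonalCoordinates v hv p = p.1 • v + p.2 := by
  simp [orthogonalCoordinates]

theorem measurePreserving : MeasurePreserving (orthogonalCoordinates v hv) := by
  unfold orthogonalCoordinates
  exact (WithLp.volume_preserving_toLp ℝ (ℝ ∙ v)ᗮ).trans (LinearIsometryEquiv.measurePreserving _)

theorem inner_apply (p : ℝ × (ℝ ∙ v)ᗮ) : inner ℝ v (orthogonalCoordinates v hv p) = p.1 := by
  have h_orth : inner ℝ v (p.2 : E) = 0 :=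
    Submodule.mem_orthogonal_singleton_iff_inner_right.1 p.2.2
  rw [apply, inner_add_right, inner_smul_right, real_inner_self_eq_norm_sq, hv, h_orth]
  ring

theorem norm_sq_apply (p : ℝ × (ℝ ∙ v)ᗮ) :
    ‖orthogonalCoordinates v hv p‖ ^ 2 = p.1 ^ 2 + ‖p.2‖ ^ 2 := by
  have h_orth : inner ℝ v (p.2 : E) = 0 :=
    Submodule.mem_orthogonal_singleton_iff_inner_right.1 p.2.2
  rw [apply, norm_add_sq_real, norm_smul, real_inner_smul_left, h_orth, hv]
  simp

theorem preimage_closedBall {R : ℝ} (hR : 0 ≤ R) :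
    orthogonalCoordinates v hv ⁻¹' Metric.closedBall 0 R = {p | p.1 ^ 2 + ‖p.2‖ ^ 2 ≤ R ^ 2} := by
  ext p
  rw [Set.mem_preimage, mem_closedBall_zero_iff, ← sq_le_sq₀ (norm_nonneg _) hR, norm_sq_apply,
    Set.mem_ofPred_eq]

end orthogonalCoordinates

theorem slice_closedBall (F : Type*) [NormedAddCommGroup F] {R : ℝ} (hR : 0 ≤ R) (x : ℝ) :
    Prod.mk x ⁻¹' {p : ℝ × F | p.1 ^ 2 + ‖p.2‖ ^ 2 ≤ R ^ 2}
      = if x ∈ Set.Icc (-R) R then Metric.closedBall (0 : F) √(R ^ 2 - x ^ 2) else ∅ := by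
  have h_Icc : x ∈ Set.Icc (-R) R ↔ 0 ≤ R ^ 2 - x ^ 2 := by
    rw [sub_nonneg, sq_le_sq, abs_of_nonneg hR, abs_le, Set.mem_Icc]
  ext y
  split_ifs with hx
  · rw [mem_closedBall_zero_iff, le_sqrt (norm_nonneg y) (h_Icc.1 hx)]
    simp [le_sub_iff_add_le']
  · have : R ^ 2 < x ^ 2 := by simpa using h_Icc.not.1 hx
    simp only [Set.mem_preimage, Set.mem_ofPred_eq, Set.mem_empty_iff_false, iff_false, not_le]
    nlinarith [sq_nonneg ‖y‖]

theorem setIntegral_closedBall_comp_inner {F : Type*} [NormedAddCommGroup F] [NormedSpace ℝ F]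
    [CompleteSpace F] {v : E} (hv : ‖v‖ = 1) {f : ℝ → F} (hf : Continuous f) {R : ℝ} (hR : 0 ≤ R) :
    ∫ x in Metric.closedBall (0 : E) R, f (inner ℝ v x)
      = ∫ x in (-R)..R, volume.real (Metric.closedBall (0 : (ℝ ∙ v)ᗮ) √(R ^ 2 - x ^ 2)) • f x := by
  set φ := orthogonalCoordinates v hv
  have hφ : MeasurePreserving φ := orthogonalCoordinates.measurePreserving hv
  have hint : IntegrableOn (fun p : ℝ × (ℝ ∙ v)ᗮ => f p.1) (φ ⁻¹' Metric.closedBall 0 R) := by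
    simpa only [Function.comp_def, φ, orthogonalCoordinates.inner_apply] using
      (hφ.integrableOn_comp_preimage φ.measurableEmbedding).2
        (ContinuousOn.integrableOn_compact (isCompact_closedBall (0 : E) R)
          (f := fun x => f (inner ℝ v x)) (by fun_prop))
  rw [← hφ.setIntegral_preimage_emb φ.measurableEmbedding]
  simp_rw [φ, orthogonalCoordinates.inner_apply]
  rw [Measure.volume_eq_prod, setIntegral_prod_comp_fst
      (φ.measurable Metric.isClosed_closedBall.measurableSet) hint,
    intervalIntegral.integral_of_le (by linarith), ← integral_Icc_eq_integral_Ioc,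
    ← integral_indicator measurableSet_Icc]
  refine integral_congr_ae (.of_forall fun x => ?_)
  simp only [φ, orthogonalCoordinates.preimage_closedBall hv hR, slice_closedBall _ hR,
    Set.indicator_apply]
  split_ifs <;> simp

theorem volume_real_closedBall_of_finrank_eq_two (hE : Module.finrank ℝ E = 2) (x : E)
    {r : ℝ} (hr : 0 ≤ r) :
    volume.real (Metric.closedBall x r) = π * r ^ 2 := by
  have : Nontrivial E := Module.nontrivial_of_finrank_pos (R := ℝ) (by lia)
  rw [Measure.real, InnerProductSpace.volume_closedBall_of_dim_even (k := 1) hE, hE]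
  simp [ENNReal.toReal_ofReal, hr, pi_nonneg, mul_comm]

theorem setIntegral_closedBall_cexp_inner (hE : Module.finrank ℝ E = 3) {w : E} (hw : w ≠ 0)
    {R : ℝ} (hR : 0 ≤ R) :
    ∫ x in Metric.closedBall (0 : E) R, Complex.exp (Complex.I * (inner ℝ w x : ℝ))
      = (4 * π / ‖w‖ ^ 3 * scaledSphericalBessel 1 (‖w‖ * R) : ℝ) := by
  have hw_norm : ‖w‖ ≠ 0 := norm_ne_zero_iff.2 hw
  set v : E := ‖w‖⁻¹ • w
  have hv : ‖v‖ = 1 := norm_smul_inv_norm hw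
  have h_inner (x : E) : inner ℝ w x = ‖w‖ * inner ℝ v x := by
    rw [real_inner_smul_left, mul_inv_cancel_left₀ hw_norm]
  have h_plane : Module.finrank ℝ (ℝ ∙ v)ᗮ = 2 :=
    have : Fact (Module.finrank ℝ E = 2 + 1) := ⟨hE⟩
    Submodule.finrank_orthogonal_span_singleton (norm_ne_zero_iff.1 (hv ▸ one_ne_zero))
  have h_disc : ∀ x ∈ Set.uIcc (-R) R,
      volume.real (Metric.closedBall (0 : (ℝ ∙ v)ᗮ) √(R ^ 2 - x ^ 2)) • Complex.exp
          (Complex.I * (‖w‖ * x : ℝ))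
        = π * (((R : ℂ) ^ 2 - x ^ 2) * Complex.exp (Complex.I * (‖w‖ * x : ℝ))) := by
    intro x hx
    rw [Set.uIcc_of_le (by linarith)] at hx
    have h_nonneg : 0 ≤ R ^ 2 - x ^ 2 := sub_nonneg.2 (sq_le_sq' hx.1 hx.2)
    rw [volume_real_closedBall_of_finrank_eq_two h_plane _ (sqrt_nonneg _), sq_sqrt h_nonneg,
      Complex.real_smul, ← mul_assoc]
    push_cast
    rfl
  simp_rw [h_inner]
  rw [setIntegral_closedBall_comp_inner hv (f := fun x => Complex.exp (Complex.I * (‖w‖ * x : ℝ)))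
      (by fun_prop) hR, intervalIntegral.integral_congr h_disc, intervalIntegral.integral_const_mul,
    integral_sq_sub_sq_mul_cexp_I hw_norm]
  push_cast
  ring

end Ball

theorem measurePreserving_of_abs_det_eq_one {V : Type*} [NormedAddCommGroup V] [NormedSpace ℝ V]
    [FiniteDimensional ℝ V] [MeasurableSpace V] [BorelSpace V] (μ : Measure V) [μ.IsAddHaarMeasure]
    {f : V →ₗ[ℝ] V} (hf : |LinearMap.det f| = 1) : MeasurePreserving f μ μ := by
  refine ⟨f.continuous_of_finiteDimensional.measurable, ?_⟩
  rw [Measure.map_linearMap_addHaar_eq_smul_addHaar μ (abs_pos.1 (hf ▸ one_pos)), abs_inv, hf]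
  simp

/-- The linear map `diag(b, c, d)` from `ℝ³` to Euclidean space. It turns the quadratic form
`(b * u₁) ^ 2 + (c * u₂) ^ 2 + (d * u₃) ^ 2` into the squared norm. The nested `WithLp 2` keeps the
coordinates as pairs while supplying the inner product that `ℝ × ℝ × ℝ` lacks. -/
def diagonalMap (b c d : ℝ) (u : ℝ × ℝ × ℝ) : WithLp 2 (ℝ × WithLp 2 (ℝ × ℝ)) :=
  .toLp 2 (b * u.1, .toLp 2 (c * u.2.1, d * u.2.2))

namespace diagonalMap

variable {b c d : ℝ}

theorem norm_sq (b c d : ℝ) (u : ℝ × ℝ × ℝ) :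
    ‖diagonalMap b c d u‖ ^ 2 = (b * u.1) ^ 2 + (c * u.2.1) ^ 2 + (d * u.2.2) ^ 2 := by
  simp [diagonalMap, WithLp.prod_norm_sq_eq_of_L2, mul_pow, add_assoc]

theorem inner_inv (hb : b ≠ 0) (hc : c ≠ 0) (hd : d ≠ 0) (w u : ℝ × ℝ × ℝ) :
    inner ℝ (diagonalMap b c d w) (diagonalMap b⁻¹ c⁻¹ d⁻¹ u)
      = w.1 * u.1 + w.2.1 * u.2.1 + w.2.2 * u.2.2 := by
  simp only [diagonalMap, WithLp.prod_inner_apply, Real.inner_apply]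
  field_simp
  ring

theorem injective (hb : b ≠ 0) (hc : c ≠ 0) (hd : d ≠ 0) :
    Function.Injective (diagonalMap b c d) := by
  intro u v huv
  simpa [diagonalMap, Prod.ext_iff, hb, hc, hd] using huv

theorem ne_zero (hb : b ≠ 0) (hc : c ≠ 0) (hd : d ≠ 0) {u : ℝ × ℝ × ℝ} (hu : u ≠ 0) :
    diagonalMap b c d u ≠ 0 := by
  have h_zero : diagonalMap b c d 0 = 0 := by simp [diagonalMap]
  exact h_zero ▸ (injective hb hc hd).ne hu

theorem measurableEmbedding (hb : b ≠ 0) (hc : c ≠ 0) (hd : d ≠ 0) :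
    MeasurableEmbedding (diagonalMap b c d) :=
  Continuous.measurableEmbedding (by unfold diagonalMap; fun_prop) (injective hb hc hd)

theorem measurePreserving (h : |b * (c * d)| = 1) : MeasurePreserving (diagonalMap b c d) := by
  have : (volume : Measure (ℝ × ℝ)).IsAddHaarMeasure :=
    Measure.prod.instIsAddHaarMeasure volume volume
  have : (volume : Measure (ℝ × ℝ × ℝ)).IsAddHaarMeasure :=
    Measure.prod.instIsAddHaarMeasure volume volume
  let D : (ℝ × ℝ × ℝ) →ₗ[ℝ] ℝ × ℝ × ℝ :=
    (LinearMap.lsmul ℝ ℝ b).prodMap ((LinearMap.lsmul ℝ ℝ c).prodMap (LinearMap.lsmul ℝ ℝ d))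
  have hD : LinearMap.det D = b * (c * d) := by simp [D, LinearMap.det_prodMap]
  exact (WithLp.volume_preserving_toLp ℝ (WithLp 2 (ℝ × ℝ))).comp
    (((MeasurePreserving.id volume).prod (WithLp.volume_preserving_toLp ℝ ℝ)).comp
      (measurePreserving_of_abs_det_eq_one volume (hD ▸ h)))

end diagonalMap

theorem setIntegral_ellipsoid_cexp {b c d : ℝ} (h : |b * (c * d)| = 1) {w : ℝ × ℝ × ℝ}
    (hw : w ≠ 0) {s : ℝ} (hs : 0 ≤ s) :
    ∫ u in {u : ℝ × ℝ × ℝ | (u.1 / b) ^ 2 + (u.2.1 / c) ^ 2 + (u.2.2 / d) ^ 2 ≤ s},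
        Complex.exp (Complex.I * (w.1 * u.1 + w.2.1 * u.2.1 + w.2.2 * u.2.2 : ℝ))
      = (4 * π / ‖diagonalMap b c d w‖ ^ 3
          * scaledSphericalBessel 1 (‖diagonalMap b c d w‖ * √s) : ℝ) := by
  obtain ⟨hb, hc, hd⟩ : b ≠ 0 ∧ c ≠ 0 ∧ d ≠ 0 := by
    simpa using abs_pos.1 (h ▸ one_pos : 0 < |b * (c * d)|)
  have h_inv : |b⁻¹ * (c⁻¹ * d⁻¹)| = 1 := by rw [← mul_inv, ← mul_inv, abs_inv, h, inv_one]
  have h_preimage : {u : ℝ × ℝ × ℝ | (u.1 / b) ^ 2 + (u.2.1 / c) ^ 2 + (u.2.2 / d) ^ 2 ≤ s}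
      = diagonalMap b⁻¹ c⁻¹ d⁻¹ ⁻¹' Metric.closedBall 0 √s := by
    ext u
    simp only [Set.mem_preimage, mem_closedBall_zero_iff, le_sqrt (norm_nonneg _) hs,
      diagonalMap.norm_sq, Set.mem_ofPred_eq, div_eq_inv_mul]
  have h_finrank : Module.finrank ℝ (WithLp 2 (ℝ × WithLp 2 (ℝ × ℝ))) = 3 := by
    simp [(WithLp.linearEquiv 2 ℝ _).finrank_eq]
  rw [← setIntegral_closedBall_cexp_inner h_finrank (diagonalMap.ne_zero hb hc hd hw)
      (sqrt_nonneg s),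
    ← (diagonalMap.measurePreserving h_inv).setIntegral_preimage_emb
      (diagonalMap.measurableEmbedding (inv_ne_zero hb) (inv_ne_zero hc) (inv_ne_zero hd)),
    h_preimage]
  simp_rw [diagonalMap.inner_inv hb hc hd]

theorem norm_diagonalMap_two_pi_smul {a : ℝ} (ha : 0 ≤ a) (m : ℝ × ℝ × ℝ) :
    ‖diagonalMap √a √a a⁻¹ ((2 * π) • m)‖
      = 2 * π * √(a * (m.1 ^ 2 + m.2.1 ^ 2) + m.2.2 ^ 2 / a ^ 2) := by
  rw [← sq_eq_sq₀ (norm_nonneg _) (by positivity), diagonalMap.norm_sq, mul_pow _ √_,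
    sq_sqrt (by positivity)]
  simp only [Prod.smul_fst, Prod.smul_snd, smul_eq_mul, mul_pow, sq_sqrt ha, inv_pow]
  ring

theorem setIntegral_spheroid_cexp {a s : ℝ} (ha : 0 < a) {m : ℝ × ℝ × ℝ} (hm : m ≠ 0)
    {g : ℝ} (hg : g = √(a * (m.1 ^ 2 + m.2.1 ^ 2) + m.2.2 ^ 2 / a ^ 2)) (hs : 0 ≤ s) :
    ∫ u in {u : ℝ × ℝ × ℝ | (u.1 ^ 2 + u.2.1 ^ 2) / a + a ^ 2 * u.2.2 ^ 2 ≤ s},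
        Complex.exp (2 * (π : ℂ) * Complex.I *
          ((m.1 * u.1 + m.2.1 * u.2.1 + m.2.2 * u.2.2 : ℝ) : ℂ))
      = (4 * π / (2 * π * g) ^ 3 * scaledSphericalBessel 1 (2 * π * g * √s) : ℝ) := by
  have h_unimodular : |√a * (√a * a⁻¹)| = 1 := by
    rw [← mul_assoc, mul_self_sqrt ha.le, mul_inv_cancel₀ ha.ne', abs_one]
  have h_form (u : ℝ × ℝ × ℝ) : (u.1 ^ 2 + u.2.1 ^ 2) / a + a ^ 2 * u.2.2 ^ 2
      = (u.1 / √a) ^ 2 + (u.2.1 / √a) ^ 2 + (u.2.2 / a⁻¹) ^ 2 := by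
    simp only [div_pow, sq_sqrt ha.le, div_inv_eq_mul]
    ring
  have h_phase (u : ℝ × ℝ × ℝ) :
      2 * (π : ℂ) * Complex.I * ((m.1 * u.1 + m.2.1 * u.2.1 + m.2.2 * u.2.2 : ℝ) : ℂ)
        = Complex.I * (((2 * π) • m).1 * u.1 + ((2 * π) • m).2.1 * u.2.1
            + ((2 * π) • m).2.2 * u.2.2 : ℝ) := by
    simp only [Prod.smul_fst, Prod.smul_snd, smul_eq_mul]
    push_cast
    ring
  simp_rw [h_form, h_phase]
  rw [setIntegral_ellipsoid_cexp h_unimodular (smul_ne_zero two_pi_pos.ne' hm) hs,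
    norm_diagonalMap_two_pi_smul ha.le, ← hg]

theorem iterated_fourier_integral_ellipsoid_general (a t : ℝ) (ha : 0 < a) (ht : 0 ≤ t)
    (m : ℝ × ℝ × ℝ) (hm : m ≠ 0) (g : ℝ)
    (hg : g = √(a * (m.1 ^ 2 + m.2.1 ^ 2) + m.2.2 ^ 2 / a ^ 2))
    (I : ℝ → ℂ)
    (hI : ∀ s : ℝ, I s =
      ∫ u in {u : ℝ × ℝ × ℝ | (u.1 ^ 2 + u.2.1 ^ 2) / a + a ^ 2 * u.2.2 ^ 2 ≤ s},
        Complex.exp (2 * (π : ℂ) * Complex.I *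
          ((m.1 * u.1 + m.2.1 * u.2.1 + m.2.2 * u.2.2 : ℝ) : ℂ))) :
    (∫ t₁ in (0 : ℝ)..t, ∫ t₂ in (0 : ℝ)..t₁, I t₂)
      = ((t ^ ((3 : ℝ) / 2) * cos (2 * π * g * √t) / (π ^ 3 * g ^ 4)
          - 3 * t * sin (2 * π * g * √t) / (π ^ 4 * g ^ 5)
          - 15 * √t * cos (2 * π * g * √t) / (4 * π ^ 5 * g ^ 6)
          + 15 * sin (2 * π * g * √t) / (8 * π ^ 6 * g ^ 7) : ℝ) : ℂ) := by
  have hk : 2 * π * g ≠ 0 := by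
    rw [hg, ← norm_diagonalMap_two_pi_smul ha.le, norm_ne_zero_iff]
    have h_sqrt : √a ≠ 0 := (sqrt_pos.2 ha).ne'
    exact diagonalMap.ne_zero h_sqrt h_sqrt (inv_ne_zero ha.ne') (smul_ne_zero two_pi_pos.ne' hm)
  have hg_ne : g ≠ 0 := right_ne_zero_of_mul hk
  have h_ball (s : ℝ) (hs : 0 ≤ s) := (hI s).trans (setIntegral_spheroid_cexp ha hm hg hs)
  have h_once (t₁ : ℝ) (ht₁ : 0 ≤ t₁) := integral_eq_scaledSphericalBessel_succ hk ht₁ h_ball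
  have h_rpow : t ^ ((3 : ℝ) / 2) = √t ^ 3 := by
    rw [sqrt_eq_rpow, ← rpow_mul_natCast ht]
    norm_num
  rw [integral_eq_scaledSphericalBessel_succ hk ht h_once, scaledSphericalBessel_three, h_rpow]
  congr 1
  simp only [mul_pow, sq_sqrt ht]
  field_simp
  ring

/-- For `a, t > 0`, nonzero `m ∈ ℤ³` and `g = √(a(m₁²+m₂²) + m₃²/a²)`, the twice iterated
integral `I_{[2]}(m,t) = ∫₀ᵗ ∫₀^{t₁} I(m,t₂) dt₂ dt₁` of the ellipsoid Fourier integral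
`I(m,s)` equals
`t^{3/2}cos(2πg√t)/(π³g⁴) − 3t·sin(2πg√t)/(π⁴g⁵) − 15√t·cos(2πg√t)/(4π⁵g⁶) + 15·sin(2πg√t)/(8π⁶g⁷)`. -/
theorem iterated_fourier_integral_ellipsoid (a t : ℝ) (ha : 0 < a) (ht : 0 < t)
    (m : ℤ × ℤ × ℤ) (hm : m ≠ 0) (g : ℝ)
    (hg : g = Real.sqrt (a * ((m.1 : ℝ) ^ 2 + (m.2.1 : ℝ) ^ 2) + (m.2.2 : ℝ) ^ 2 / a ^ 2))
    (I : ℝ → ℂ)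
    (hI : ∀ s : ℝ, I s =
      ∫ u in {u : ℝ × ℝ × ℝ | (u.1 ^ 2 + u.2.1 ^ 2) / a + a ^ 2 * u.2.2 ^ 2 ≤ s},
        Complex.exp (2 * (π : ℂ) * Complex.I *
          (((m.1 : ℝ) * u.1 + (m.2.1 : ℝ) * u.2.1 + (m.2.2 : ℝ) * u.2.2 : ℝ) : ℂ))) :
    (∫ t₁ in (0 : ℝ)..t, ∫ t₂ in (0 : ℝ)..t₁, I t₂)
      = ((t ^ ((3 : ℝ) / 2) * Real.cos (2 * π * g * Real.sqrt t) / (π ^ 3 * g ^ 4)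
          - 3 * t * Real.sin (2 * π * g * Real.sqrt t) / (π ^ 4 * g ^ 5)
          - 15 * Real.sqrt t * Real.cos (2 * π * g * Real.sqrt t) / (4 * π ^ 5 * g ^ 6)
          + 15 * Real.sin (2 * π * g * Real.sqrt t) / (8 * π ^ 6 * g ^ 7) : ℝ) : ℂ) :=
  iterated_fourier_integral_ellipsoid_general a t ha ht.le (m.1, m.2.1, m.2.2)
    (by simpa [Prod.ext_iff] using hm) g hg I hI
end
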